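/- arXiv:1303.4172 — 3 statements merged into one kernel-verified Lean document; each statement's English description precedes it below -/
import Mathlib

section
/- Let ℓ ∈ 𝕃, ν ∈ (0,1], τ > 0, suppose γ := max_{‖λ‖₁=1} min_i (−(Aλ)_i) > 0 with γ_i < 1 for all i, and let {λ_t} be boosting iterates whose steps satisfy α_ada_i − τ ≤ α_i ≤ α_ada_i + τ for every i, where α_ada_i := (ν/2)·ln((1+γ_i)/(1−γ_i)). Let θ ∈ [0,γ). Then for all integers t ≥ t₀ ≥ 0 (with λ_{t+1} ≠ 0): Σ_{i=1}^m 1[(−(Aλ_{t+1})_i)/‖λ_{t+1}‖₁ < θ] ≤ m·C_{t+1}·exp(θ·‖λ_{t₀}‖₁)·L(Aλ_{t₀})·Π_{i=t₀+1}^{t+1} [e^{θτ}·((1+γ_i)/(1−γ_i))^{θν/2}·(e^τ·C_i⁴/2)·(1−γ_i²)^{ν/2}·((1+γ_i)^{1−ν} + (1−γ_i)^{1−ν})]. -/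
open Real Finset

noncomputable section

/-- The property that `C` is a valid curvature constant at level `z`:
`C ≥ 1` and `C⁻¹ ≤ eˣ / ℓ⁽ⁱ⁾(x) ≤ C` for all `x ≤ z` and `i ∈ {0,1,2}`. -/
def CBound (ℓ : ℝ → ℝ) (z C : ℝ) : Prop :=
  1 ≤ C ∧ ∀ x ≤ z, ∀ i ≤ 2,
    C⁻¹ ≤ Real.exp x / iteratedDeriv i ℓ x ∧ Real.exp x / iteratedDeriv i ℓ x ≤ C

/-- `C_ℓ(z)`: the least valid curvature constant at level `z`. -/
def Cconst (ℓ : ℝ → ℝ) (z : ℝ) : ℝ := sInf {C : ℝ | CBound ℓ z C}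

/-- Membership in the class `𝕃`: positive, twice continuously differentiable,
strictly convex, and `C_ℓ(z) < ∞` (i.e. some valid constant exists) for every `z`. -/
def MemL (ℓ : ℝ → ℝ) : Prop :=
  (∀ x, 0 < ℓ x) ∧ ContDiff ℝ 2 ℓ ∧ StrictConvexOn ℝ Set.univ ℓ ∧
    ∀ z : ℝ, ∃ C : ℝ, CBound ℓ z C

/-- Membership in `𝕃_∞`: in `𝕃` and moreover `C_ℓ(z) → 1` as `z → −∞`. -/
def MemLinf (ℓ : ℝ → ℝ) : Prop :=
  MemL ℓ ∧ Filter.Tendsto (Cconst ℓ) Filter.atBot (nhds 1)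

variable {m n : ℕ}

/-- The empirical risk `L(Aλ) = (1/m) Σᵢ ℓ((Aλ)ᵢ)`. -/
def LL (ℓ : ℝ → ℝ) (A : Matrix (Fin m) (Fin n) ℝ) (lam : Fin n → ℝ) : ℝ :=
  (∑ i, ℓ (A.mulVec lam i)) / m

/-- The gradient vector `∇L(Aλ)`, with `i`-th entry `ℓ'((Aλ)ᵢ)/m`. -/
def gradL (ℓ : ℝ → ℝ) (A : Matrix (Fin m) (Fin n) ℝ) (lam : Fin n → ℝ) : Fin m → ℝ :=
  fun i => deriv ℓ (A.mulVec lam i) / m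

/-- `‖Aᵀ ∇L(Aλ)‖_∞`. -/
def gInf (ℓ : ℝ → ℝ) (A : Matrix (Fin m) (Fin n) ℝ) (lam : Fin n → ℝ) : ℝ :=
  ⨆ j : Fin n, |∑ i, gradL ℓ A lam i * A i j|

/-- `‖∇L(Aλ)‖₁`. -/
def gOne (ℓ : ℝ → ℝ) (A : Matrix (Fin m) (Fin n) ℝ) (lam : Fin n → ℝ) : ℝ :=
  ∑ i, |gradL ℓ A lam i|

/-- `γ̂ = ‖Aᵀ∇L(Aλ)‖_∞ / ‖∇L(Aλ)‖₁`. -/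
def gammaHat (ℓ : ℝ → ℝ) (A : Matrix (Fin m) (Fin n) ℝ) (lam : Fin n → ℝ) : ℝ :=
  gInf ℓ A lam / gOne ℓ A lam

/-- `C = C_ℓ(ℓ⁻¹(m · L(Aλ)))`. -/
def Cstep (ℓ : ℝ → ℝ) (A : Matrix (Fin m) (Fin n) ℝ) (lam : Fin n → ℝ) : ℝ :=
  Cconst ℓ (Function.invFun ℓ ((m : ℝ) * LL ℓ A lam))

/-- The (minimum `l¹`) margin `M(Aλ) = min_k (−(Aλ)_k) / ‖λ‖₁`. -/
def margin (A : Matrix (Fin m) (Fin n) ℝ) (lam : Fin n → ℝ) : ℝ :=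
  ⨅ k : Fin m, (-(A.mulVec lam k)) / (∑ j, |lam j|)

/-- The maximum margin `γ = max_{‖λ‖₁=1} min_i (−(Aλ)ᵢ)`. -/
def gammaMax (A : Matrix (Fin m) (Fin n) ℝ) : ℝ :=
  sSup {r : ℝ | ∃ lam : Fin n → ℝ, (∑ j, |lam j|) = 1 ∧ r = ⨅ i : Fin m, -(A.mulVec lam i)}

/-- Boosting iterates: `λ₀ = 0`, `λ_t = λ_{t-1} + α_t • v_t` where `v_t` is a signed
standard basis vector satisfying `∇L(Aλ_{t-1})ᵀ A v_t = −‖Aᵀ∇L(Aλ_{t-1})‖_∞`. -/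
def IsBoostSeq (ℓ : ℝ → ℝ) (A : Matrix (Fin m) (Fin n) ℝ)
    (lam : ℕ → Fin n → ℝ) (α : ℕ → ℝ) (v : ℕ → Fin n → ℝ) : Prop :=
  lam 0 = 0 ∧
  (∀ t : ℕ, 1 ≤ t → lam t = lam (t-1) + α t • v t) ∧
  (∀ t : ℕ, 1 ≤ t → ∃ s : ℝ, (s = 1 ∨ s = -1) ∧ ∃ j : Fin n, v t = s • (Pi.single j (1:ℝ) : Fin n → ℝ)) ∧
  (∀ t : ℕ, 1 ≤ t →
    ∑ i, gradL ℓ A (lam (t-1)) i * A.mulVec (v t) i = - gInf ℓ A (lam (t-1)))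

/-- The quantity `Υ_ν(γ)`. -/
def Upsilon (ν γ : ℝ) : ℝ :=
  ((2/ν) * Real.log 2 - (2/ν) * Real.log ((1+γ) ^ (1-ν) + (1-γ) ^ (1-ν))
      - Real.log (1-γ^2)) /
    (Real.log (1+γ) - Real.log (1-γ))

/-!
The potential `∑ᵢ exp(θ‖λ‖₁ + (Aλ)ᵢ)` dominates the number of examples whose margin is below `θ`,
so it suffices to control its growth along the iterates.

Every `(Aλ)ᵢ` lies below `ℓ⁻¹(m · L(Aλ))`, hence `eˣ`, `ℓ` and `ℓ'` may be exchanged for one another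
at `x = (Aλ)ᵢ` at the price of a factor `C` each time. Passing from `eˣ` to `ℓ'` and back, and using
the convexity bound `exp(u a) ≤ cosh a + u sinh a` for `|u| ≤ 1`, a step `a` along the steepest
coordinate multiplies `∑ᵢ exp((Aλ)ᵢ)` by at most `C² (cosh a - γ̂ sinh a)`. This has a closed form
at the AdaBoost step, and moving `a` by at most `τ` costs a further `e^τ`. Meanwhile `‖λ‖₁` grows by
at most `|a|`. One last exchange compares `∑ᵢ exp((Aλ)ᵢ)` with `m · L(Aλ)` at `t₀`.
-/

section CurvatureConstants

variable {ℓ : ℝ → ℝ} {z C : ℝ} {k : ℕ}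

namespace CBound

lemma pos (h : CBound ℓ z C) : 0 < C := one_pos.trans_le h.1

lemma mono_level (h : CBound ℓ z C) {w : ℝ} (hw : w ≤ z) : CBound ℓ w C :=
  ⟨h.1, fun x hx => h.2 x (hx.trans hw)⟩

lemma iteratedDeriv_pos (h : CBound ℓ z C) (hk : k ≤ 2) : 0 < iteratedDeriv k ℓ z := by
  have hratio : 0 < exp z / iteratedDeriv k ℓ z :=
    (inv_pos.2 h.pos).trans_le (h.2 z le_rfl k hk).1
  exact (div_pos_iff_of_pos_left (exp_pos z)).1 hratio

lemma exp_le (h : CBound ℓ z C) (hk : k ≤ 2) : exp z ≤ C * iteratedDeriv k ℓ z :=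
  (div_le_iff₀ (h.iteratedDeriv_pos hk)).1 (h.2 z le_rfl k hk).2

lemma iteratedDeriv_le (h : CBound ℓ z C) (hk : k ≤ 2) : iteratedDeriv k ℓ z ≤ C * exp z := by
  have hinv := (h.2 z le_rfl k hk).1
  rwa [inv_le_comm₀ h.pos (div_pos (exp_pos z) (h.iteratedDeriv_pos hk)), inv_div,
    div_le_iff₀ (exp_pos z)] at hinv

end CBound

lemma cBound_Cconst (h : ∃ C, CBound ℓ z C) : CBound ℓ z (Cconst ℓ z) := by
  have hone : 1 ≤ Cconst ℓ z := le_csInf h fun C hC => hC.1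
  refine ⟨hone, fun x hx k hk => ⟨?_, le_csInf h fun C hC => (hC.2 x hx k hk).2⟩⟩
  obtain ⟨C₀, hC₀⟩ := h
  have hratio : 0 < exp x / iteratedDeriv k ℓ x :=
    div_pos (exp_pos x) ((hC₀.mono_level hx).iteratedDeriv_pos hk)
  rw [inv_le_comm₀ (one_pos.trans_le hone) hratio]
  exact le_csInf ⟨C₀, hC₀⟩ fun C hC => (inv_le_comm₀ hC.pos hratio).1 (hC.2 x hx k hk).1

end CurvatureConstants

section LossClass

lemma tendsto_atTop_of_convexOn_of_deriv_pos {f : ℝ → ℝ} (hf : ConvexOn ℝ Set.univ f) {x : ℝ}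
    (hx : 0 < deriv f x) : Filter.Tendsto f Filter.atTop Filter.atTop := by
  have htangent : ∀ᶠ y in Filter.atTop, deriv f x * (y - x) + f x ≤ f y := by
    filter_upwards [Filter.eventually_gt_atTop x] with y hy
    have hslope := hf.deriv_le_slope (Set.mem_univ x) (Set.mem_univ y) hy
      (differentiableAt_of_deriv_ne_zero hx.ne')
    rw [slope_def_field, le_div_iff₀ (sub_pos.2 hy)] at hslope
    linarith
  refine Filter.tendsto_atTop_mono' _ htangent (Filter.tendsto_atTop_add_const_right _ _ ?_)
  exact (Filter.tendsto_atTop_add_const_right _ (-x) Filter.tendsto_id).const_mul_atTop hx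

namespace MemL

variable {ℓ : ℝ → ℝ}

lemma deriv_pos (hℓ : MemL ℓ) (x : ℝ) : 0 < deriv ℓ x := by
  obtain ⟨C, hC⟩ := hℓ.2.2.2 x
  simpa only [iteratedDeriv_one] using hC.iteratedDeriv_pos one_le_two

lemma le_invFun (hℓ : MemL ℓ) {x y : ℝ} (h : ℓ x ≤ y) : x ≤ Function.invFun ℓ y := by
  have htop := tendsto_atTop_of_convexOn_of_deriv_pos hℓ.2.2.1.convexOn (hℓ.deriv_pos x)
  have hy : y ∈ Set.range ℓ :=
    mem_range_of_exists_le_of_exists_ge hℓ.2.1.continuous ⟨x, h⟩ (htop.eventually_ge_atTop y).exists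
  rwa [← (strictMono_of_deriv_pos hℓ.deriv_pos).le_iff_le, Function.invFun_eq hy]

lemma one_le_Cstep (hℓ : MemL ℓ) (A : Matrix (Fin m) (Fin n) ℝ) (lam : Fin n → ℝ) :
    1 ≤ Cstep ℓ A lam :=
  (cBound_Cconst (hℓ.2.2.2 _)).1

end MemL

lemma natCast_mul_LL (hm : 0 < m) (ℓ : ℝ → ℝ) (A : Matrix (Fin m) (Fin n) ℝ) (lam : Fin n → ℝ) :
    m * LL ℓ A lam = ∑ i, ℓ (A.mulVec lam i) :=
  mul_div_cancel₀ _ (Nat.cast_pos.2 hm).ne'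

variable {ℓ : ℝ → ℝ}

lemma LL_nonneg (hℓ : MemL ℓ) (A : Matrix (Fin m) (Fin n) ℝ) (lam : Fin n → ℝ) :
    0 ≤ LL ℓ A lam :=
  div_nonneg (sum_nonneg fun _ _ => (hℓ.1 _).le) m.cast_nonneg

lemma cBound_Cstep (hm : 0 < m) (hℓ : MemL ℓ) (A : Matrix (Fin m) (Fin n) ℝ) (lam : Fin n → ℝ)
    (i : Fin m) : CBound ℓ (A.mulVec lam i) (Cstep ℓ A lam) := by
  refine (cBound_Cconst (hℓ.2.2.2 _)).mono_level (hℓ.le_invFun ?_)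
  rw [natCast_mul_LL hm]
  exact single_le_sum (f := fun i => ℓ (A.mulVec lam i)) (fun i _ => (hℓ.1 _).le) (mem_univ i)

end LossClass

section Gradient

variable {ℓ : ℝ → ℝ}

lemma gammaHat_nonneg (ℓ : ℝ → ℝ) (A : Matrix (Fin m) (Fin n) ℝ) (lam : Fin n → ℝ) :
    0 ≤ gammaHat ℓ A lam :=
  div_nonneg (Real.iSup_nonneg fun _ => abs_nonneg _) (sum_nonneg fun _ _ => abs_nonneg _)

lemma gOne_eq_sum_deriv_div (hℓ : MemL ℓ) (A : Matrix (Fin m) (Fin n) ℝ) (lam : Fin n → ℝ) :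
    gOne ℓ A lam = (∑ i, deriv ℓ (A.mulVec lam i)) / m := by
  rw [gOne, sum_div]
  exact sum_congr rfl fun i _ => abs_of_nonneg (div_nonneg (hℓ.deriv_pos _).le m.cast_nonneg)

lemma gammaHat_le_one (ℓ : ℝ → ℝ) {A : Matrix (Fin m) (Fin n) ℝ} (hA : ∀ i j, |A i j| ≤ 1)
    (lam : Fin n → ℝ) : gammaHat ℓ A lam ≤ 1 := by
  have hgOne : 0 ≤ gOne ℓ A lam := sum_nonneg fun _ _ => abs_nonneg _
  refine div_le_one_of_le₀ (Real.iSup_le (fun j => ?_) hgOne) hgOne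
  refine (abs_sum_le_sum_abs _ _).trans (sum_le_sum fun i _ => ?_)
  rw [abs_mul]
  exact mul_le_of_le_one_right (abs_nonneg _) (hA i j)

lemma abs_gammaHat_lt_one {A : Matrix (Fin m) (Fin n) ℝ} {lam : Fin n → ℝ}
    (h : gammaHat ℓ A lam < 1) : |gammaHat ℓ A lam| < 1 := by
  rwa [abs_of_nonneg (gammaHat_nonneg ℓ A lam)]

lemma sum_deriv_mul_mulVec_eq (hm : 0 < m) (hℓ : MemL ℓ) {A : Matrix (Fin m) (Fin n) ℝ}
    {lam w : Fin n → ℝ} (hw : ∑ i, gradL ℓ A lam i * A.mulVec w i = -gInf ℓ A lam) :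
    ∑ i, deriv ℓ (A.mulVec lam i) * A.mulVec w i =
      -(gammaHat ℓ A lam * ∑ i, deriv ℓ (A.mulVec lam i)) := by
  have : NeZero m := ⟨hm.ne'⟩
  have hm' : (m : ℝ) ≠ 0 := (Nat.cast_pos.2 hm).ne'
  have hsum : 0 < ∑ i, deriv ℓ (A.mulVec lam i) :=
    sum_pos (fun i _ => hℓ.deriv_pos _) univ_nonempty
  have hgInf : gInf ℓ A lam * m = gammaHat ℓ A lam * ∑ i, deriv ℓ (A.mulVec lam i) := by
    rw [gammaHat, gOne_eq_sum_deriv_div hℓ]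
    field_simp
  rw [← hgInf, ← neg_mul, ← hw, sum_mul]
  refine sum_congr rfl fun i _ => ?_
  rw [gradL]
  field_simp

end Gradient

section ExponentialSum

/-- The exponential surrogate `∑ᵢ exp((Aλ)ᵢ)`, comparable with `m · L(Aλ)` up to the
curvature constant. -/
def expSum (A : Matrix (Fin m) (Fin n) ℝ) (lam : Fin n → ℝ) : ℝ :=
  ∑ i, exp (A.mulVec lam i)

lemma expSum_nonneg (A : Matrix (Fin m) (Fin n) ℝ) (lam : Fin n → ℝ) : 0 ≤ expSum A lam :=
  sum_nonneg fun _ _ => (exp_pos _).le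

variable {ℓ : ℝ → ℝ} {A : Matrix (Fin m) (Fin n) ℝ} {lam w : Fin n → ℝ}

lemma expSum_le_Cstep_mul_LL (hm : 0 < m) (hℓ : MemL ℓ) (A : Matrix (Fin m) (Fin n) ℝ)
    (lam : Fin n → ℝ) : expSum A lam ≤ Cstep ℓ A lam * (m * LL ℓ A lam) := by
  rw [natCast_mul_LL hm, mul_sum]
  exact sum_le_sum fun i _ => by
    simpa only [iteratedDeriv_zero] using (cBound_Cstep hm hℓ A lam i).exp_le zero_le_two

lemma sum_deriv_le_Cstep_mul_expSum (hm : 0 < m) (hℓ : MemL ℓ) (A : Matrix (Fin m) (Fin n) ℝ)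
    (lam : Fin n → ℝ) : ∑ i, deriv ℓ (A.mulVec lam i) ≤ Cstep ℓ A lam * expSum A lam := by
  rw [expSum, mul_sum]
  exact sum_le_sum fun i _ => by
    simpa only [iteratedDeriv_one] using (cBound_Cstep hm hℓ A lam i).iteratedDeriv_le one_le_two

lemma expSum_add_smul_le_sum_deriv (hm : 0 < m) (hℓ : MemL ℓ) (a : ℝ) :
    expSum A (lam + a • w) ≤
      Cstep ℓ A lam * ∑ i, deriv ℓ (A.mulVec lam i) * exp (A.mulVec w i * a) := by
  rw [expSum, mul_sum]
  refine sum_le_sum fun i _ => ?_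
  have hexp : exp (A.mulVec lam i) ≤ Cstep ℓ A lam * deriv ℓ (A.mulVec lam i) := by
    simpa only [iteratedDeriv_one] using (cBound_Cstep hm hℓ A lam i).exp_le one_le_two
  calc exp (A.mulVec (lam + a • w) i)
      = exp (A.mulVec lam i) * exp (A.mulVec w i * a) := by
        rw [← exp_add, Matrix.mulVec_add, Matrix.mulVec_smul, Pi.add_apply, Pi.smul_apply,
          smul_eq_mul, mul_comm a]
    _ ≤ Cstep ℓ A lam * deriv ℓ (A.mulVec lam i) * exp (A.mulVec w i * a) := by gcongr
    _ = Cstep ℓ A lam * (deriv ℓ (A.mulVec lam i) * exp (A.mulVec w i * a)) := mul_assoc ..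

lemma sum_mul_exp_mul_le {ι : Type*} (s : Finset ι) {p u : ι → ℝ} (hp : ∀ i ∈ s, 0 ≤ p i)
    (hu : ∀ i ∈ s, |u i| ≤ 1) (a : ℝ) :
    ∑ i ∈ s, p i * exp (u i * a) ≤
      (∑ i ∈ s, p i) * cosh a + (∑ i ∈ s, p i * u i) * sinh a := by
  rw [sum_mul, sum_mul, ← sum_add_distrib]
  refine sum_le_sum fun i hi => ?_
  calc p i * exp (u i * a) ≤ p i * (cosh a + u i * sinh a) :=
        mul_le_mul_of_nonneg_left (exp_mul_le_cosh_add_mul_sinh (hu i hi) a) (hp i hi)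
    _ = p i * cosh a + p i * u i * sinh a := by ring

lemma cosh_sub_mul_sinh_nonneg {g : ℝ} (hg : |g| ≤ 1) (a : ℝ) : 0 ≤ cosh a - g * sinh a := by
  have hexp := exp_mul_le_cosh_add_mul_sinh ((abs_neg g).trans_le hg) a
  rw [neg_mul, neg_mul, ← sub_eq_add_neg] at hexp
  exact (exp_pos _).le.trans hexp

lemma abs_mulVec_le_sum_abs (hA : ∀ i j, |A i j| ≤ 1) (w : Fin n → ℝ) (i : Fin m) :
    |A.mulVec w i| ≤ ∑ j, |w j| := by
  refine (abs_sum_le_sum_abs (fun j => A i j * w j) univ).trans (sum_le_sum fun j _ => ?_)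
  rw [abs_mul]
  exact mul_le_of_le_one_left (abs_nonneg _) (hA i j)

lemma expSum_add_smul_le (hm : 0 < m) (hA : ∀ i j, |A i j| ≤ 1) (hℓ : MemL ℓ)
    (hw : ∑ j, |w j| ≤ 1) (hgrad : ∑ i, gradL ℓ A lam i * A.mulVec w i = -gInf ℓ A lam) (a : ℝ) :
    expSum A (lam + a • w) ≤
      Cstep ℓ A lam ^ 2 * (cosh a - gammaHat ℓ A lam * sinh a) * expSum A lam := by
  have hC : 0 ≤ Cstep ℓ A lam := zero_le_one.trans (hℓ.one_le_Cstep A lam)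
  have hcosh : 0 ≤ cosh a - gammaHat ℓ A lam * sinh a :=
    cosh_sub_mul_sinh_nonneg (abs_le.2
      ⟨by linarith [gammaHat_nonneg ℓ A lam], gammaHat_le_one ℓ hA lam⟩) a
  calc expSum A (lam + a • w)
      ≤ Cstep ℓ A lam * ∑ i, deriv ℓ (A.mulVec lam i) * exp (A.mulVec w i * a) :=
        expSum_add_smul_le_sum_deriv hm hℓ a
    _ ≤ Cstep ℓ A lam * ((∑ i, deriv ℓ (A.mulVec lam i)) * cosh a +
          (∑ i, deriv ℓ (A.mulVec lam i) * A.mulVec w i) * sinh a) := by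
        gcongr
        exact sum_mul_exp_mul_le univ (fun _ _ => (hℓ.deriv_pos _).le)
          (fun i _ => (abs_mulVec_le_sum_abs hA w i).trans hw) a
    _ = Cstep ℓ A lam * ((∑ i, deriv ℓ (A.mulVec lam i)) *
          (cosh a - gammaHat ℓ A lam * sinh a)) := by
        rw [sum_deriv_mul_mulVec_eq hm hℓ hgrad]
        ring
    _ ≤ Cstep ℓ A lam * ((Cstep ℓ A lam * expSum A lam) *
          (cosh a - gammaHat ℓ A lam * sinh a)) := by
        gcongr
        exact sum_deriv_le_Cstep_mul_expSum hm hℓ A lam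
    _ = _ := by ring

end ExponentialSum

section AdaStep

/-- The AdaBoost step with shrinkage `ν` for an edge `g`. -/
def adaStep (ν g : ℝ) : ℝ := ν / 2 * log ((1 + g) / (1 - g))

/-- The factor by which one step within `τ` of `adaStep ν g` multiplies `marginPotential θ`.
The curvature of the loss enters only through `K`: the recursion gives `K = C ^ 2`, while the
final bound is stated with `K = C ^ 4`. -/
def nearAdaFactor (θ τ ν g K : ℝ) : ℝ :=
  exp (θ * τ) * ((1 + g) / (1 - g)) ^ (θ * ν / 2) * (exp τ * K / 2) * (1 - g ^ 2) ^ (ν / 2) *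
    ((1 + g) ^ (1 - ν) + (1 - g) ^ (1 - ν))

variable {θ τ ν g K a : ℝ}

lemma nearAdaFactor_mul (θ τ ν g c K : ℝ) :
    nearAdaFactor θ τ ν g (c * K) = c * nearAdaFactor θ τ ν g K := by
  simp only [nearAdaFactor]
  ring

lemma nearAdaFactor_nonneg (θ τ ν : ℝ) (hg : |g| < 1) (hK : 0 ≤ K) :
    0 ≤ nearAdaFactor θ τ ν g K := by
  obtain ⟨hg₁, hg₂⟩ := abs_lt.1 hg
  have hadd : 0 < 1 + g := by linarith
  have hsub : 0 < 1 - g := by linarith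
  have hsq : 0 < 1 - g ^ 2 := by nlinarith
  unfold nearAdaFactor
  positivity

/-- The bare factor `c i₀` comes from comparing `expSum` with `L` at the first iterate; the two
spare powers of each `c i` absorb it. -/
lemma mul_prod_nearAdaFactor_sq_le {ι : Type*} {s : Finset ι} {g c : ι → ℝ}
    (hg : ∀ i ∈ s, |g i| < 1) (hc : ∀ i ∈ s, 1 ≤ c i) {i₀ : ι} (hi₀ : i₀ ∈ s) :
    c i₀ * ∏ i ∈ s, nearAdaFactor θ τ ν (g i) (c i ^ 2) ≤
      ∏ i ∈ s, nearAdaFactor θ τ ν (g i) (c i ^ 4) := by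
  have hsq : ∀ i ∈ s, 1 ≤ c i ^ 2 := fun i hi => one_le_pow₀ (hc i hi)
  have hle : c i₀ ≤ ∏ i ∈ s, c i ^ 2 :=
    calc c i₀ ≤ c i₀ ^ 2 := le_self_pow₀ (hc i₀ hi₀) two_ne_zero
      _ = ∏ i ∈ {i₀}, c i ^ 2 := (prod_singleton _ _).symm
      _ ≤ ∏ i ∈ s, c i ^ 2 := prod_le_prod_of_subset_of_one_le (singleton_subset_iff.2 hi₀)
        (fun i _ => sq_nonneg (c i)) fun i hi _ => hsq i hi
  calc c i₀ * ∏ i ∈ s, nearAdaFactor θ τ ν (g i) (c i ^ 2)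
      ≤ (∏ i ∈ s, c i ^ 2) * ∏ i ∈ s, nearAdaFactor θ τ ν (g i) (c i ^ 2) :=
        mul_le_mul_of_nonneg_right hle <| prod_nonneg fun i hi =>
          nearAdaFactor_nonneg θ τ ν (hg i hi) (sq_nonneg _)
    _ = ∏ i ∈ s, nearAdaFactor θ τ ν (g i) (c i ^ 4) := by
        rw [← prod_mul_distrib]
        exact prod_congr rfl fun i _ => by rw [← nearAdaFactor_mul, ← pow_add]

lemma adaStep_nonneg (hν : 0 ≤ ν) (hg₀ : 0 ≤ g) (hg₁ : g < 1) : 0 ≤ adaStep ν g := by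
  refine mul_nonneg (div_nonneg hν zero_le_two) (log_nonneg ?_)
  rw [one_le_div (sub_pos.2 hg₁)]
  linarith

lemma exp_mul_adaStep (hg : |g| < 1) (θ : ℝ) :
    exp (θ * adaStep ν g) = ((1 + g) / (1 - g)) ^ (θ * ν / 2) := by
  obtain ⟨hg₁, hg₂⟩ := abs_lt.1 hg
  rw [rpow_def_of_pos (div_pos (by linarith) (by linarith)), adaStep]
  ring_nf

lemma exp_adaStep (hg : |g| < 1) : exp (adaStep ν g) = ((1 + g) / (1 - g)) ^ (ν / 2) := by
  simpa only [one_mul] using exp_mul_adaStep hg 1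

lemma mul_div_rpow_eq {p q : ℝ} (hp : 0 < p) (hq : 0 < q) (s : ℝ) :
    q * (p / q) ^ s = (p * q) ^ s * q ^ (1 - 2 * s) := by
  rw [div_rpow hp.le hq.le, mul_rpow hp.le hq.le, rpow_sub hq, rpow_one, two_mul, rpow_add hq]
  field_simp

lemma cosh_sub_mul_sinh (g a : ℝ) :
    cosh a - g * sinh a = ((1 - g) * exp a + (1 + g) * exp (-a)) / 2 := by
  rw [cosh_eq, sinh_eq]
  ring

lemma cosh_sub_mul_sinh_adaStep (hg : |g| < 1) :
    cosh (adaStep ν g) - g * sinh (adaStep ν g) =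
      (1 - g ^ 2) ^ (ν / 2) * ((1 + g) ^ (1 - ν) + (1 - g) ^ (1 - ν)) / 2 := by
  obtain ⟨hg₁, hg₂⟩ := abs_lt.1 hg
  have hadd : 0 < 1 + g := by linarith
  have hsub : 0 < 1 - g := by linarith
  have hminus := mul_div_rpow_eq hadd hsub (ν / 2)
  have hplus := mul_div_rpow_eq hsub hadd (ν / 2)
  have hprod : (1 + g) * (1 - g) = 1 - g ^ 2 := by ring
  rw [cosh_sub_mul_sinh, exp_neg, exp_adaStep hg, ← inv_rpow (div_pos hadd hsub).le, inv_div,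
    hminus, hplus, mul_comm (1 - g), hprod, mul_div_cancel₀ ν two_ne_zero]
  ring

lemma cosh_sub_mul_sinh_le (hg : |g| < 1)
    (ha : a ∈ Set.Icc (adaStep ν g - τ) (adaStep ν g + τ)) :
    cosh a - g * sinh a ≤
      exp τ / 2 * (1 - g ^ 2) ^ (ν / 2) * ((1 + g) ^ (1 - ν) + (1 - g) ^ (1 - ν)) := by
  obtain ⟨hg₁, hg₂⟩ := abs_lt.1 hg
  have hadd : 0 ≤ 1 + g := by linarith
  have hsub : 0 ≤ 1 - g := by linarith
  have hpos : exp a ≤ exp τ * exp (adaStep ν g) := by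
    rw [← exp_add]
    exact exp_le_exp.2 (by linarith [ha.2])
  have hneg : exp (-a) ≤ exp τ * exp (-adaStep ν g) := by
    rw [← exp_add]
    exact exp_le_exp.2 (by linarith [ha.1])
  calc cosh a - g * sinh a
      = ((1 - g) * exp a + (1 + g) * exp (-a)) / 2 := cosh_sub_mul_sinh g a
    _ ≤ ((1 - g) * (exp τ * exp (adaStep ν g)) +
          (1 + g) * (exp τ * exp (-adaStep ν g))) / 2 := by gcongr
    _ = exp τ * (cosh (adaStep ν g) - g * sinh (adaStep ν g)) := by
        rw [cosh_sub_mul_sinh]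
        ring
    _ = _ := by
        rw [cosh_sub_mul_sinh_adaStep hg]
        ring

lemma abs_le_adaStep_add (hν : 0 ≤ ν) (hg₀ : 0 ≤ g) (hg₁ : g < 1)
    (ha : a ∈ Set.Icc (adaStep ν g - τ) (adaStep ν g + τ)) : |a| ≤ adaStep ν g + τ :=
  abs_le.2 ⟨by linarith [adaStep_nonneg hν hg₀ hg₁, ha.1], ha.2⟩

end AdaStep

section MarginPotential

/-- The potential `∑ᵢ exp(θ‖λ‖₁ + (Aλ)ᵢ)`: an example of margin below `θ` contributes at
least `1` to it. -/
def marginPotential (θ : ℝ) (A : Matrix (Fin m) (Fin n) ℝ) (lam : Fin n → ℝ) : ℝ :=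
  exp (θ * ∑ j, |lam j|) * expSum A lam

variable {ℓ : ℝ → ℝ} {A : Matrix (Fin m) (Fin n) ℝ} {ν τ θ : ℝ}

lemma card_margin_lt_le_marginPotential (θ : ℝ) (A : Matrix (Fin m) (Fin n) ℝ)
    {lam : Fin n → ℝ} (hlam : lam ≠ 0) :
    (#{i | -A.mulVec lam i / ∑ j, |lam j| < θ} : ℝ) ≤ marginPotential θ A lam := by
  have hnorm : 0 < ∑ j, |lam j| := by
    obtain ⟨j, hj⟩ := Function.ne_iff.1 hlam
    exact sum_pos' (fun _ _ => abs_nonneg _) ⟨j, mem_univ j, abs_pos.2 hj⟩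
  rw [natCast_card_filter, marginPotential, expSum, mul_sum]
  refine sum_le_sum fun i _ => ?_
  split_ifs with hmargin
  · rw [div_lt_iff₀ hnorm] at hmargin
    rw [← exp_add]
    exact one_le_exp (by linarith)
  · positivity

lemma marginPotential_le_LL (hm : 0 < m) (hℓ : MemL ℓ) (θ : ℝ) (A : Matrix (Fin m) (Fin n) ℝ)
    (lam : Fin n → ℝ) :
    marginPotential θ A lam ≤
      m * Cstep ℓ A lam * exp (θ * ∑ j, |lam j|) * LL ℓ A lam :=
  calc marginPotential θ A lam
      ≤ exp (θ * ∑ j, |lam j|) * (Cstep ℓ A lam * (m * LL ℓ A lam)) :=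
        mul_le_mul_of_nonneg_left (expSum_le_Cstep_mul_LL hm hℓ A lam) (exp_pos _).le
    _ = m * Cstep ℓ A lam * exp (θ * ∑ j, |lam j|) * LL ℓ A lam := by ring

lemma sum_abs_add_smul_le {ι : Type*} (s : Finset ι) (x : ι → ℝ) {w : ι → ℝ}
    (hw : ∑ j ∈ s, |w j| ≤ 1) (a : ℝ) :
    ∑ j ∈ s, |(x + a • w) j| ≤ ∑ j ∈ s, |x j| + |a| :=
  calc ∑ j ∈ s, |(x + a • w) j| ≤ ∑ j ∈ s, (|x j| + |a| * |w j|) :=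
        sum_le_sum fun j _ => (abs_add_le _ _).trans_eq (by rw [← abs_mul]; rfl)
    _ = ∑ j ∈ s, |x j| + |a| * ∑ j ∈ s, |w j| := by rw [sum_add_distrib, mul_sum]
    _ ≤ ∑ j ∈ s, |x j| + |a| := by gcongr; exact mul_le_of_le_one_right (abs_nonneg a) hw

lemma exp_mul_sum_abs_add_smul_le {ι : Type*} (s : Finset ι) (x : ι → ℝ) {w : ι → ℝ} {g a : ℝ}
    (hw : ∑ j ∈ s, |w j| ≤ 1) (hν : 0 ≤ ν) (hθ : 0 ≤ θ) (hg₀ : 0 ≤ g) (hg₁ : g < 1)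
    (ha : a ∈ Set.Icc (adaStep ν g - τ) (adaStep ν g + τ)) :
    exp (θ * ∑ j ∈ s, |(x + a • w) j|) ≤
      exp (θ * τ) * ((1 + g) / (1 - g)) ^ (θ * ν / 2) * exp (θ * ∑ j ∈ s, |x j|) := by
  rw [← exp_mul_adaStep (abs_lt.2 ⟨by linarith, hg₁⟩), ← exp_add, ← exp_add, exp_le_exp,
    ← mul_add, ← mul_add]
  have hnorm := sum_abs_add_smul_le s x hw a
  have hstep := abs_le_adaStep_add hν hg₀ hg₁ ha
  exact mul_le_mul_of_nonneg_left (by linarith) hθ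

lemma marginPotential_add_smul_le (hm : 0 < m) (hA : ∀ i j, |A i j| ≤ 1) (hℓ : MemL ℓ)
    (hν : 0 ≤ ν) (hθ : 0 ≤ θ) {lam w : Fin n → ℝ} {a : ℝ} (hw : ∑ j, |w j| ≤ 1)
    (hgrad : ∑ i, gradL ℓ A lam i * A.mulVec w i = -gInf ℓ A lam)
    (hγ : gammaHat ℓ A lam < 1)
    (ha : a ∈ Set.Icc (adaStep ν (gammaHat ℓ A lam) - τ) (adaStep ν (gammaHat ℓ A lam) + τ)) :
    marginPotential θ A (lam + a • w) ≤
      nearAdaFactor θ τ ν (gammaHat ℓ A lam) (Cstep ℓ A lam ^ 2) * marginPotential θ A lam := by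
  have hγ₀ := gammaHat_nonneg ℓ A lam
  have hγabs : |gammaHat ℓ A lam| < 1 := abs_gammaHat_lt_one hγ
  have hnorm := exp_mul_sum_abs_add_smul_le univ lam hw hν hθ hγ₀ hγ ha
  have hcosh := cosh_sub_mul_sinh_le hγabs ha
  have hexpSum : expSum A (lam + a • w) ≤ Cstep ℓ A lam ^ 2 * (exp τ / 2 *
      (1 - gammaHat ℓ A lam ^ 2) ^ (ν / 2) *
      ((1 + gammaHat ℓ A lam) ^ (1 - ν) + (1 - gammaHat ℓ A lam) ^ (1 - ν))) * expSum A lam := by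
    have := expSum_nonneg A lam
    exact (expSum_add_smul_le hm hA hℓ hw hgrad a).trans (by gcongr)
  calc marginPotential θ A (lam + a • w) ≤ _ :=
        mul_le_mul hnorm hexpSum (expSum_nonneg _ _) ((exp_pos _).le.trans hnorm)
    _ = _ := by
        simp only [nearAdaFactor, marginPotential]
        ring

end MarginPotential

section BoostingIterates

variable {ℓ : ℝ → ℝ} {A : Matrix (Fin m) (Fin n) ℝ} {ν τ θ : ℝ}
  {lam : ℕ → Fin n → ℝ} {α : ℕ → ℝ} {v : ℕ → Fin n → ℝ}

namespace IsBoostSeq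

lemma sum_abs_direction (hseq : IsBoostSeq ℓ A lam α v) (s : ℕ) : ∑ j, |v (s + 1) j| = 1 := by
  obtain ⟨σ, hσ, j, hv⟩ := hseq.2.2.1 (s + 1) s.succ_pos
  have hσabs : |σ| = 1 := by rcases hσ with rfl | rfl <;> simp
  simp [hv, hσabs, Pi.single_apply, apply_ite abs]

lemma marginPotential_succ_le (hseq : IsBoostSeq ℓ A lam α v) (hm : 0 < m)
    (hA : ∀ i j, |A i j| ≤ 1) (hℓ : MemL ℓ) (hν : 0 ≤ ν) (hθ : 0 ≤ θ) {s : ℕ}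
    (hγ : gammaHat ℓ A (lam s) < 1)
    (hstep : α (s + 1) ∈ Set.Icc (adaStep ν (gammaHat ℓ A (lam s)) - τ)
      (adaStep ν (gammaHat ℓ A (lam s)) + τ)) :
    marginPotential θ A (lam (s + 1)) ≤
      nearAdaFactor θ τ ν (gammaHat ℓ A (lam s)) (Cstep ℓ A (lam s) ^ 2) *
        marginPotential θ A (lam s) := by
  rw [hseq.2.1 (s + 1) s.succ_pos]
  exact marginPotential_add_smul_le hm hA hℓ hν hθ (hseq.sum_abs_direction s).le
    (hseq.2.2.2 (s + 1) s.succ_pos) hγ hstep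

lemma marginPotential_le_prod (hseq : IsBoostSeq ℓ A lam α v) (hm : 0 < m)
    (hA : ∀ i j, |A i j| ≤ 1) (hℓ : MemL ℓ) (hν : 0 ≤ ν) (hθ : 0 ≤ θ) {t₀ t : ℕ}
    (hγ : ∀ s ≥ t₀, gammaHat ℓ A (lam s) < 1)
    (hstep : ∀ s ≥ t₀, α (s + 1) ∈ Set.Icc (adaStep ν (gammaHat ℓ A (lam s)) - τ)
      (adaStep ν (gammaHat ℓ A (lam s)) + τ)) (ht : t₀ ≤ t) :
    marginPotential θ A (lam t) ≤ marginPotential θ A (lam t₀) *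
      ∏ s ∈ Ico t₀ t,
        nearAdaFactor θ τ ν (gammaHat ℓ A (lam s)) (Cstep ℓ A (lam s) ^ 2) := by
  have hfactor : ∀ s ≥ t₀,
      0 ≤ nearAdaFactor θ τ ν (gammaHat ℓ A (lam s)) (Cstep ℓ A (lam s) ^ 2) := fun s hs =>
    nearAdaFactor_nonneg θ τ ν (abs_gammaHat_lt_one (hγ s hs)) (sq_nonneg _)
  simpa only [zero_mul, sum_const_zero, add_zero] using
    discrete_gronwall_prod_general (u := fun s => marginPotential θ A (lam s)) (b := fun _ => 0)
      (fun s hs => (hseq.marginPotential_succ_le hm hA hℓ hν hθ (hγ s hs) (hstep s hs)).trans_eq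
        (add_zero _).symm) hfactor ht

end IsBoostSeq

theorem margin_distribution_near_ada_general (hm : 0 < m) (hA : ∀ i j, |A i j| ≤ 1)
    (hℓ : MemL ℓ) (hν : 0 ≤ ν) (hseq : IsBoostSeq ℓ A lam α v) (hθ : 0 ≤ θ) {t₀ t : ℕ}
    (hγ : ∀ s ≥ t₀, gammaHat ℓ A (lam s) < 1)
    (hstep : ∀ s ≥ t₀, α (s + 1) ∈ Set.Icc (adaStep ν (gammaHat ℓ A (lam s)) - τ)
      (adaStep ν (gammaHat ℓ A (lam s)) + τ)) (ht : t₀ ≤ t) (hne : lam (t + 1) ≠ 0) :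
    (#{i | -A.mulVec (lam (t + 1)) i / ∑ j, |lam (t + 1) j| < θ} : ℝ) ≤
      m * Cstep ℓ A (lam t) * exp (θ * ∑ j, |lam t₀ j|) * LL ℓ A (lam t₀) *
        ∏ s ∈ Ico t₀ (t + 1),
          nearAdaFactor θ τ ν (gammaHat ℓ A (lam s)) (Cstep ℓ A (lam s) ^ 4) := by
  set F := fun k : ℕ => ∏ s ∈ Ico t₀ (t + 1),
    nearAdaFactor θ τ ν (gammaHat ℓ A (lam s)) (Cstep ℓ A (lam s) ^ k)
  have hF : ∀ k, 0 ≤ F k := fun k => prod_nonneg fun s hs => nearAdaFactor_nonneg θ τ ν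
    (abs_gammaHat_lt_one (hγ s (mem_Ico.1 hs).1))
    (pow_nonneg (zero_le_one.trans (hℓ.one_le_Cstep A (lam s))) k)
  have habsorb : Cstep ℓ A (lam t₀) * F 2 ≤ F 4 :=
    mul_prod_nearAdaFactor_sq_le (fun s hs => abs_gammaHat_lt_one (hγ s (mem_Ico.1 hs).1))
      (fun s _ => hℓ.one_le_Cstep A (lam s)) (left_mem_Ico.2 (Nat.lt_succ_of_le ht))
  have hLL := LL_nonneg hℓ A (lam t₀)
  have hF₄ := hF 4
  calc (#{i | -A.mulVec (lam (t + 1)) i / ∑ j, |lam (t + 1) j| < θ} : ℝ)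
      ≤ marginPotential θ A (lam (t + 1)) := card_margin_lt_le_marginPotential θ A hne
    _ ≤ marginPotential θ A (lam t₀) * F 2 :=
        hseq.marginPotential_le_prod hm hA hℓ hν hθ hγ hstep (Nat.le_succ_of_le ht)
    _ ≤ m * Cstep ℓ A (lam t₀) * exp (θ * ∑ j, |lam t₀ j|) * LL ℓ A (lam t₀) * F 2 :=
        mul_le_mul_of_nonneg_right (marginPotential_le_LL hm hℓ θ A (lam t₀)) (hF 2)
    _ = m * exp (θ * ∑ j, |lam t₀ j|) * LL ℓ A (lam t₀) * (Cstep ℓ A (lam t₀) * F 2) := by ring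
    _ ≤ m * exp (θ * ∑ j, |lam t₀ j|) * LL ℓ A (lam t₀) * F 4 := by gcongr
    _ ≤ Cstep ℓ A (lam t) * (m * exp (θ * ∑ j, |lam t₀ j|) * LL ℓ A (lam t₀) * F 4) :=
        le_mul_of_one_le_left (by positivity) (hℓ.one_le_Cstep A (lam t))
    _ = m * Cstep ℓ A (lam t) * exp (θ * ∑ j, |lam t₀ j|) * LL ℓ A (lam t₀) * F 4 := by ring

end BoostingIterates

/-- general margin-distribution bound for steps within `τ` of the
AdaBoost step. -/
theorem margin_distribution_near_ada {m n : ℕ} (hm : 0 < m) (hn : 0 < n)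
    (A : Matrix (Fin m) (Fin n) ℝ) (hA : ∀ i j, |A i j| ≤ 1)
    (ℓ : ℝ → ℝ) (hℓ : MemL ℓ)
    (ν : ℝ) (hν : ν ∈ Set.Ioc (0:ℝ) 1) (τ : ℝ) (hτ : 0 < τ)
    (hγpos : 0 < gammaMax A)
    (lam : ℕ → Fin n → ℝ) (α : ℕ → ℝ) (v : ℕ → Fin n → ℝ)
    (hseq : IsBoostSeq ℓ A lam α v)
    (hγlt : ∀ i : ℕ, 1 ≤ i → gammaHat ℓ A (lam (i-1)) < 1)
    (hstep : ∀ i : ℕ, 1 ≤ i →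
      (ν/2) * Real.log
          ((1 + gammaHat ℓ A (lam (i-1))) / (1 - gammaHat ℓ A (lam (i-1)))) - τ ≤ α i ∧
      α i ≤ (ν/2) * Real.log
          ((1 + gammaHat ℓ A (lam (i-1))) / (1 - gammaHat ℓ A (lam (i-1)))) + τ)
    (θ : ℝ) (hθ0 : 0 ≤ θ) (hθ : θ < gammaMax A)
    (t₀ t : ℕ) (ht : t₀ ≤ t) (hne : lam (t+1) ≠ 0) :
    ((Finset.univ.filter (fun i : Fin m =>
        (-(A.mulVec (lam (t+1)) i)) / (∑ j, |lam (t+1) j|) < θ)).card : ℝ) ≤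
      (m:ℝ) * Cstep ℓ A (lam t) * Real.exp (θ * ∑ j, |lam t₀ j|) * LL ℓ A (lam t₀) *
        ∏ i ∈ Finset.Icc (t₀+1) (t+1),
          (Real.exp (θ*τ) *
            ((1 + gammaHat ℓ A (lam (i-1))) / (1 - gammaHat ℓ A (lam (i-1)))) ^ (θ*ν/2) *
            (Real.exp τ * (Cstep ℓ A (lam (i-1)))^4 / 2) *
            (1 - (gammaHat ℓ A (lam (i-1)))^2) ^ (ν/2) *
            ((1 + gammaHat ℓ A (lam (i-1))) ^ (1-ν) +
              (1 - gammaHat ℓ A (lam (i-1))) ^ (1-ν))) := by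
  rw [← Ico_add_one_right_eq_Icc, ← prod_Ico_add']
  exact margin_distribution_near_ada_general hm hA hℓ hν.1.le hseq hθ0
    (fun s _ => hγlt (s + 1) s.succ_pos) (fun s _ => hstep (s + 1) s.succ_pos) ht hne
end
end

section
/- For every ν ∈ (0,1] and every γ ∈ (0,1): γ/2 ≤ Υ_ν(γ) ≤ γ. -/
open Real Finset

noncomputable section

variable {m n : ℕ}

/-!
Let `H_α` be the Rényi entropy of order `α` of a coin with probabilities `(1 ± γ) / 2`. The
numerator of `Υ_ν(γ)` is `2 (log 2 - H_{1-ν}) - log (1 - γ²)`, so the theorem amounts to two-sided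
bounds on `H_{1-ν}`. The uniform bound `H_{1-ν} ≤ log 2`, together with a comparison of power
series, gives `γ / 2 ≤ Υ_ν(γ)`; replacing `H_{1-ν}` by the smaller Shannon entropy turns the
quotient into exactly `γ`.
-/

/-- The Rényi entropy of order `α` of the weights `p`. The order `α = 1`, where the limit is the
Shannon entropy, gives the junk value `0`; for `α = 0` the convention `0 ^ 0 = 1` makes it the
logarithm of the number of all points instead of that of the support. -/
def renyiEntropy {ι : Type*} [Fintype ι] (α : ℝ) (p : ι → ℝ) : ℝ :=
  (1 - α)⁻¹ * log (∑ i, p i ^ α)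

section Entropy

variable {ι : Type*} [Fintype ι] {α : ℝ} {p : ι → ℝ}

lemma exp_mul_sum_negMulLog_le_sum_rpow (hp : p ∈ stdSimplex ℝ ι) (α : ℝ) :
    exp ((1 - α) * ∑ i, negMulLog (p i)) ≤ ∑ i, p i ^ α := by
  have tilt (i : ι) : p i * exp ((α - 1) * log (p i)) ≤ p i ^ α := by
    rcases (hp.1 i).eq_or_lt with h | h
    · rw [← h, zero_mul]
      exact rpow_nonneg le_rfl α
    · rw [mul_comm (α - 1), ← rpow_def_of_pos h, rpow_sub_one h.ne', mul_div_cancel₀ _ h.ne']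
  calc exp ((1 - α) * ∑ i, negMulLog (p i))
      = exp (∑ i, p i • ((α - 1) * log (p i))) := by
        rw [mul_sum]
        congr! 2 with i
        rw [negMulLog, smul_eq_mul]
        ring
    _ ≤ ∑ i, p i • exp ((α - 1) * log (p i)) :=
        convexOn_exp.map_sum_le (fun i _ ↦ hp.1 i) hp.2 fun _ _ ↦ Set.mem_univ _
    _ ≤ ∑ i, p i ^ α := sum_le_sum fun i _ ↦ tilt i

lemma sum_rpow_pos_of_mem_stdSimplex (hp : p ∈ stdSimplex ℝ ι) (α : ℝ) : 0 < ∑ i, p i ^ α :=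
  (exp_pos _).trans_le (exp_mul_sum_negMulLog_le_sum_rpow hp α)

lemma sum_negMulLog_le_renyiEntropy (hp : p ∈ stdSimplex ℝ ι) (hα : α < 1) :
    ∑ i, negMulLog (p i) ≤ renyiEntropy α p := by
  rw [renyiEntropy, le_inv_mul_iff₀ (sub_pos.2 hα),
    le_log_iff_exp_le (sum_rpow_pos_of_mem_stdSimplex hp α)]
  exact exp_mul_sum_negMulLog_le_sum_rpow hp α

lemma card_pos_of_mem_stdSimplex (hp : p ∈ stdSimplex ℝ ι) : (0 : ℝ) < Fintype.card ι := by
  obtain ⟨i, -, -⟩ := exists_ne_zero_of_sum_ne_zero (hp.2.trans_ne one_ne_zero)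
  exact_mod_cast Fintype.card_pos_iff.2 ⟨i⟩

lemma sum_rpow_le_card_rpow (hp : p ∈ stdSimplex ℝ ι) (hα₀ : 0 ≤ α) (hα₁ : α ≤ 1) :
    ∑ i, p i ^ α ≤ (Fintype.card ι : ℝ) ^ (1 - α) := by
  have hcard := card_pos_of_mem_stdSimplex hp
  have jensen : ∑ i, (Fintype.card ι : ℝ)⁻¹ • p i ^ α ≤ (∑ i, (Fintype.card ι : ℝ)⁻¹ • p i) ^ α :=
    (concaveOn_rpow hα₀ hα₁).le_map_sum (fun _ _ ↦ by positivity) (by simp [hcard.ne'])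
      fun i _ ↦ hp.1 i
  rw [← smul_sum, ← smul_sum, hp.2, smul_eq_mul, smul_eq_mul, mul_one,
    inv_mul_le_iff₀ hcard] at jensen
  rwa [rpow_sub hcard, rpow_one, div_eq_mul_inv, ← inv_rpow hcard.le]

lemma renyiEntropy_le_log_card (hp : p ∈ stdSimplex ℝ ι) (hα₀ : 0 ≤ α) (hα₁ : α < 1) :
    renyiEntropy α p ≤ log (Fintype.card ι) := by
  have hcard := card_pos_of_mem_stdSimplex hp
  rw [renyiEntropy, inv_mul_le_iff₀ (sub_pos.2 hα₁), ← log_rpow hcard]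
  exact log_le_log (sum_rpow_pos_of_mem_stdSimplex hp α) (sum_rpow_le_card_rpow hp hα₀ hα₁.le)

end Entropy

/-- The law of a coin of bias `γ`: the probability vector whose entropies appear in `Υ_ν(γ)`. -/
def biasedCoin (γ : ℝ) : Fin 2 → ℝ :=
  ![(1 + γ) / 2, (1 - γ) / 2]

section BiasedCoin

variable {γ ν : ℝ}

lemma biasedCoin_mem_stdSimplex (hγ : |γ| ≤ 1) : biasedCoin γ ∈ stdSimplex ℝ (Fin 2) := by
  obtain ⟨hl, hr⟩ := abs_le.1 hγ
  refine ⟨Fin.forall_fin_two.2 ⟨?_, ?_⟩, ?_⟩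
  · exact div_nonneg (by linarith) zero_le_two
  · exact div_nonneg (by linarith) zero_le_two
  · rw [Fin.sum_univ_two]
    change (1 + γ) / 2 + (1 - γ) / 2 = 1
    ring

lemma sum_negMulLog_biasedCoin (γ : ℝ) :
    ∑ i, negMulLog (biasedCoin γ i) =
      log 2 - ((1 + γ) * log (1 + γ) + (1 - γ) * log (1 - γ)) / 2 := by
  simp only [Fin.sum_univ_two, biasedCoin, Matrix.cons_val_zero, Matrix.cons_val_one,
    div_eq_mul_inv, negMulLog_mul]
  simp only [negMulLog, log_inv]
  ring

lemma renyiEntropy_biasedCoin (hν : ν ≠ 0) (hγ : |γ| < 1) :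
    renyiEntropy (1 - ν) (biasedCoin γ) =
      log 2 - (log 2 - log ((1 + γ) ^ (1 - ν) + (1 - γ) ^ (1 - ν))) / ν := by
  obtain ⟨hl, hr⟩ := abs_lt.1 hγ
  have hplus : 0 < 1 + γ := by linarith
  have hminus : 0 < 1 - γ := by linarith
  simp only [renyiEntropy, Fin.sum_univ_two, biasedCoin, Matrix.cons_val_zero,
    Matrix.cons_val_one]
  rw [div_rpow hplus.le zero_le_two, div_rpow hminus.le zero_le_two, ← add_div,
    log_div (by positivity) (by positivity), log_rpow zero_lt_two, sub_sub_cancel]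
  field_simp
  ring

lemma log_one_sub_sq (hγ : |γ| < 1) : log (1 - γ ^ 2) = log (1 + γ) + log (1 - γ) := by
  obtain ⟨hl, hr⟩ := abs_lt.1 hγ
  rw [← log_mul (by linarith) (by linarith)]
  ring_nf

lemma log_one_sub_lt_log_one_add (hγ₀ : 0 < γ) (hγ₁ : γ < 1) : log (1 - γ) < log (1 + γ) :=
  log_lt_log (by linarith) (by linarith)

-- The power series in `γ ^ 2` of the two sides have coefficients `1 / (2k + 1)` and `1 / (k + 1)`.
lemma half_mul_log_sub_log_le_neg_log_one_sub_sq (hγ : |γ| < 1) :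
    γ / 2 * (log (1 + γ) - log (1 - γ)) ≤ -log (1 - γ ^ 2) := by
  have hleft := (hasSum_log_sub_log_of_abs_lt_one hγ).mul_left (γ / 2)
  have hright := hasSum_pow_div_log_of_abs_lt_one (x := γ ^ 2) (by
    rw [abs_pow]
    exact pow_lt_one₀ (abs_nonneg γ) hγ two_ne_zero)
  refine hasSum_le (fun k ↦ ?_) hleft hright
  calc γ / 2 * (2 * (1 / (2 * k + 1)) * γ ^ (2 * k + 1))
      = (γ ^ 2) ^ (k + 1) / (2 * k + 1) := by
        rw [← pow_mul]
        ring
    _ ≤ (γ ^ 2) ^ (k + 1) / (k + 1) := by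
        gcongr
        linarith [(k.cast_nonneg : (0 : ℝ) ≤ k)]

lemma upsilon_eq_renyiEntropy (hν : ν ≠ 0) (hγ : |γ| < 1) :
    Upsilon ν γ =
      (2 * (log 2 - renyiEntropy (1 - ν) (biasedCoin γ)) - log (1 - γ ^ 2)) /
        (log (1 + γ) - log (1 - γ)) := by
  rw [Upsilon, renyiEntropy_biasedCoin hν hγ]
  ring

lemma half_le_upsilon (hν : ν ∈ Set.Ioc 0 1) (hγ : γ ∈ Set.Ioo 0 1) : γ / 2 ≤ Upsilon ν γ := by
  obtain ⟨hν₀, hν₁⟩ := hν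
  have hγ_abs : |γ| < 1 := abs_lt.2 ⟨by linarith [hγ.1], hγ.2⟩
  have hentropy : renyiEntropy (1 - ν) (biasedCoin γ) ≤ log 2 := by
    simpa using renyiEntropy_le_log_card (biasedCoin_mem_stdSimplex hγ_abs.le)
      (sub_nonneg.2 hν₁) (sub_lt_self 1 hν₀)
  rw [upsilon_eq_renyiEntropy hν₀.ne' hγ_abs,
    le_div_iff₀ (sub_pos.2 (log_one_sub_lt_log_one_add hγ.1 hγ.2))]
  linarith [half_mul_log_sub_log_le_neg_log_one_sub_sq hγ_abs]

lemma upsilon_le_self (hν : 0 < ν) (hγ : γ ∈ Set.Ioo 0 1) : Upsilon ν γ ≤ γ := by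
  have hγ_abs : |γ| < 1 := abs_lt.2 ⟨by linarith [hγ.1], hγ.2⟩
  have hentropy : ∑ i, negMulLog (biasedCoin γ i) ≤ renyiEntropy (1 - ν) (biasedCoin γ) :=
    sum_negMulLog_le_renyiEntropy (biasedCoin_mem_stdSimplex hγ_abs.le) (sub_lt_self 1 hν)
  rw [sum_negMulLog_biasedCoin] at hentropy
  rw [upsilon_eq_renyiEntropy hν.ne' hγ_abs,
    div_le_iff₀ (sub_pos.2 (log_one_sub_lt_log_one_add hγ.1 hγ.2)), log_one_sub_sq hγ_abs]
  linarith

end BiasedCoin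

/-- `γ/2 ≤ Υ_ν(γ) ≤ γ` for `ν ∈ (0,1]` and `γ ∈ (0,1)`. -/
theorem upsilon_bounds (ν γ : ℝ) (hν : ν ∈ Set.Ioc (0:ℝ) 1) (hγ : γ ∈ Set.Ioo (0:ℝ) 1) :
    γ/2 ≤ Upsilon ν γ ∧ Upsilon ν γ ≤ γ :=
  ⟨half_le_upsilon hν hγ, upsilon_le_self hν.1 hγ⟩
end
end

section
/- Let ν ∈ (0,1] and θ ∈ [0,1]. The function f(γ) := ((1+γ)/(1−γ))^{θν/2}·(1−γ²)^{ν/2}·((1+γ)^{1−ν} + (1−γ)^{1−ν}) is nonincreasing on the interval [θ, 1), i.e. for all θ ≤ γ₁ ≤ γ₂ < 1 one has f(γ₂) ≤ f(γ₁). -/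
open Real Finset

noncomputable section

variable {m n : ℕ}

/-!
The logarithm of the first two factors is a nonnegative multiple of
`(1 + θ) log (1 + γ) + (1 - θ) log (1 - γ)`, whose derivative `2 (θ - γ) / (1 - γ²)` is nonpositive
beyond `θ`. The last factor is an even concave function of `γ`, so it decreases away from `0`.
Both factors are nonnegative, so their product decreases on `[max θ 0, 1)`.
-/

theorem antitoneOn_of_quasiconcaveOn_of_even {𝕜 β : Type*} [Field 𝕜] [LinearOrder 𝕜]
    [IsStrictOrderedRing 𝕜] [Preorder β] {s : Set 𝕜} {f : 𝕜 → β} (hs : ∀ x ∈ s, -x ∈ s)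
    (hf : QuasiconcaveOn 𝕜 s f) (heven : f.Even) : AntitoneOn f (s ∩ Set.Ici 0) := by
  rintro x ⟨-, hx⟩ y ⟨hy, -⟩ hxy
  have hneg : -y ∈ {z ∈ s | f y ≤ f z} := ⟨hs y hy, (heven y).ge⟩
  have hpos : y ∈ {z ∈ s | f y ≤ f z} := ⟨hy, le_rfl⟩
  have hx_mem : x ∈ Set.Icc (-y) y := ⟨(neg_nonpos.2 (hx.trans hxy)).trans hx, hxy⟩
  exact ((hf (f y)).ordConnected.out hneg hpos hx_mem).2

theorem concaveOn_one_add_rpow_add_one_sub_rpow {p : ℝ} (hp₀ : 0 ≤ p) (hp₁ : p ≤ 1) :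
    ConcaveOn ℝ (Set.Icc (-1) 1) (fun γ : ℝ ↦ (1 + γ) ^ p + (1 - γ) ^ p) := by
  have hp := Real.concaveOn_rpow hp₀ hp₁
  have hadd : ConcaveOn ℝ (Set.Icc (-1) 1) (fun γ : ℝ ↦ (1 + γ) ^ p) :=
    (hp.translate_right 1).subset (fun γ hγ ↦ neg_le_iff_add_nonneg'.1 hγ.1)
      (convex_Icc _ _)
  have hsub : ConcaveOn ℝ (Set.Icc (-1) 1) (fun γ : ℝ ↦ (1 - γ) ^ p) :=
    ((hp.comp_affineMap (AffineMap.lineMap 1 0)).subset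
      (fun γ hγ ↦ by simpa [AffineMap.lineMap_apply] using hγ.2) (convex_Icc _ _)).congr
        fun γ _ ↦ by simp [AffineMap.lineMap_apply, neg_add_eq_sub]
  exact hadd.add hsub

theorem antitoneOn_one_add_rpow_add_one_sub_rpow {p : ℝ} (hp₀ : 0 ≤ p) (hp₁ : p ≤ 1) :
    AntitoneOn (fun γ : ℝ ↦ (1 + γ) ^ p + (1 - γ) ^ p) (Set.Icc 0 1) := by
  have hsymm : ∀ γ ∈ Set.Icc (-1 : ℝ) 1, -γ ∈ Set.Icc (-1 : ℝ) 1 :=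
    fun γ hγ ↦ ⟨neg_le_neg hγ.2, neg_le.1 hγ.1⟩
  have heven : Function.Even fun γ : ℝ ↦ (1 + γ) ^ p + (1 - γ) ^ p :=
    fun γ ↦ by simp only [← sub_eq_add_neg, sub_neg_eq_add, add_comm ((1 - γ) ^ p)]
  exact (antitoneOn_of_quasiconcaveOn_of_even hsymm
    (concaveOn_one_add_rpow_add_one_sub_rpow hp₀ hp₁).quasiconcaveOn heven).mono
      fun γ hγ ↦ ⟨⟨by linarith [hγ.1], hγ.2⟩, hγ.1⟩

theorem hasDerivAt_weighted_log_one_add_log_one_sub (θ : ℝ) {γ : ℝ} (hγ : γ ∈ Set.Ioo (-1) 1) :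
    HasDerivAt (fun x ↦ (1 + θ) * log (1 + x) + (1 - θ) * log (1 - x))
      (2 * (θ - γ) / (1 - γ ^ 2)) γ := by
  have hadd : 1 + γ ≠ 0 := by linarith [hγ.1]
  have hsub : 1 - γ ≠ 0 := by linarith [hγ.2]
  have hderiv := ((((hasDerivAt_id' γ).const_add 1).log hadd).const_mul (1 + θ)).add
    ((((hasDerivAt_id' γ).const_sub 1).log hsub).const_mul (1 - θ))
  refine hderiv.congr_deriv ?_
  rw [show 1 - γ ^ 2 = (1 + γ) * (1 - γ) by ring]
  field_simp
  ring

theorem antitoneOn_weighted_log_one_add_log_one_sub (θ : ℝ) :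
    AntitoneOn (fun γ ↦ (1 + θ) * log (1 + γ) + (1 - θ) * log (1 - γ))
      (Set.Ici θ ∩ Set.Ioo (-1) 1) := by
  refine antitoneOn_of_hasDerivWithinAt_nonpos ((convex_Ici θ).inter (convex_Ioo _ _))
    (fun γ hγ ↦ (hasDerivAt_weighted_log_one_add_log_one_sub θ hγ.2).continuousAt
      |>.continuousWithinAt)
    (fun γ hγ ↦ (hasDerivAt_weighted_log_one_add_log_one_sub θ
      (interior_subset hγ).2).hasDerivWithinAt)
    fun γ hγ ↦ ?_
  obtain ⟨hθγ, hγ₁, hγ₂⟩ := interior_subset hγ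
  exact div_nonpos_of_nonpos_of_nonneg (by linarith [Set.mem_Ici.1 hθγ]) (by nlinarith)

theorem div_rpow_mul_one_sub_sq_rpow_eq_exp (θ c : ℝ) {γ : ℝ} (hγ : γ ∈ Set.Ioo (-1) 1) :
    ((1 + γ) / (1 - γ)) ^ (θ * c) * (1 - γ ^ 2) ^ c =
      exp (c * ((1 + θ) * log (1 + γ) + (1 - θ) * log (1 - γ))) := by
  have hadd : 0 < 1 + γ := by linarith [hγ.1]
  have hsub : 0 < 1 - γ := by linarith [hγ.2]
  rw [show 1 - γ ^ 2 = (1 + γ) * (1 - γ) by ring, rpow_def_of_pos (div_pos hadd hsub),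
    rpow_def_of_pos (mul_pos hadd hsub), log_div hadd.ne' hsub.ne', log_mul hadd.ne' hsub.ne',
    ← exp_add]
  ring_nf

theorem antitoneOn_div_rpow_mul_one_sub_sq_rpow (θ : ℝ) {c : ℝ} (hc : 0 ≤ c) :
    AntitoneOn (fun γ : ℝ ↦ ((1 + γ) / (1 - γ)) ^ (θ * c) * (1 - γ ^ 2) ^ c)
      (Set.Ici θ ∩ Set.Ioo (-1) 1) :=
  ((exp_monotone.comp (monotone_mul_left_of_nonneg hc)).comp_antitoneOn
    (antitoneOn_weighted_log_one_add_log_one_sub θ)).congr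
      fun _ hγ ↦ (div_rpow_mul_one_sub_sq_rpow_eq_exp θ c hγ.2).symm

theorem upsilon_map_antitone_general (θ : ℝ) {c p : ℝ} (hc : 0 ≤ c) (hp₀ : 0 ≤ p) (hp₁ : p ≤ 1) :
    AntitoneOn (fun γ : ℝ ↦ ((1 + γ) / (1 - γ)) ^ (θ * c) * (1 - γ ^ 2) ^ c *
      ((1 + γ) ^ p + (1 - γ) ^ p)) (Set.Ico (max θ 0) 1) := by
  rintro γ₁ ⟨hθγ₁, hγ₁⟩ γ₂ ⟨hθγ₂, hγ₂⟩ hle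
  obtain ⟨hθ₁, h₁⟩ := max_le_iff.1 hθγ₁
  obtain ⟨hθ₂, h₂⟩ := max_le_iff.1 hθγ₂
  have hpower := antitoneOn_div_rpow_mul_one_sub_sq_rpow θ hc
    ⟨hθ₁, by linarith, hγ₁⟩ ⟨hθ₂, by linarith, hγ₂⟩ hle
  have hsum := antitoneOn_one_add_rpow_add_one_sub_rpow hp₀ hp₁ ⟨h₁, hγ₁.le⟩ ⟨h₂, hγ₂.le⟩ hle
  have hpower_nonneg : 0 ≤ ((1 + γ₁) / (1 - γ₁)) ^ (θ * c) * (1 - γ₁ ^ 2) ^ c := by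
    rw [div_rpow_mul_one_sub_sq_rpow_eq_exp θ c ⟨by linarith, hγ₁⟩]
    exact (exp_pos _).le
  have hsum_nonneg : 0 ≤ (1 + γ₂) ^ p + (1 - γ₂) ^ p :=
    add_nonneg (rpow_nonneg (by linarith) p) (rpow_nonneg (by linarith) p)
  exact mul_le_mul hpower hsum hsum_nonneg hpower_nonneg

/-- the map
`γ ↦ ((1+γ)/(1−γ))^{θν/2}·(1−γ²)^{ν/2}·((1+γ)^{1−ν}+(1−γ)^{1−ν})`
is nonincreasing on `[θ,1)`. -/
theorem upsilon_map_antitone (ν θ : ℝ) (hν : ν ∈ Set.Ioc (0:ℝ) 1)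
    (hθ : θ ∈ Set.Icc (0:ℝ) 1)
    (γ₁ γ₂ : ℝ) (h1 : θ ≤ γ₁) (h12 : γ₁ ≤ γ₂) (h2 : γ₂ < 1) :
    ((1+γ₂)/(1-γ₂)) ^ (θ*ν/2) * (1-γ₂^2) ^ (ν/2) *
        ((1+γ₂) ^ (1-ν) + (1-γ₂) ^ (1-ν)) ≤
      ((1+γ₁)/(1-γ₁)) ^ (θ*ν/2) * (1-γ₁^2) ^ (ν/2) *
        ((1+γ₁) ^ (1-ν) + (1-γ₁) ^ (1-ν)) := by
  simpa only [mul_div_assoc] using upsilon_map_antitone_general θ (c := ν / 2) (p := 1 - ν)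
    (by linarith [hν.1]) (by linarith [hν.2]) (by linarith [hν.1])
    ⟨max_le h1 (hθ.1.trans h1), h12.trans_lt h2⟩
    ⟨max_le (h1.trans h12) (hθ.1.trans (h1.trans h12)), h2⟩ h12
end
end
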